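/- Let v = Σ_{l=0}^{3} v^l be a graded form on ℝ³ with components in H¹_loc which is a weak solution of P(γ,μ,ω)v = 0 on ℝ³. Then for every form φ = φ⁰ + φ³ with smooth compactly supported components, ∫[⟨δ(v⁰+v³), δφ⟩ + ⟨d(v⁰+v³), dφ⟩ − ω²ε₀μ₀⟨v⁰+v³, φ⟩]dx + ⟨q̃(γ,μ,ω)(v⁰+v³), φ⟩ = 0, where ⟨q̃(γ,μ,ω)(v⁰+v³), φ⟩ := −∫ω²(γμ−ε₀μ₀)⟨v⁰+v³, φ⟩dx + ∫[⟨db,db⟩⟨v⁰,φ⁰⟩ + ⟨da,da⟩⟨v³,φ³⟩ + ⟨db, d⟨v⁰,φ⁰⟩⟩ + ⟨da, d⟨v³,φ³⟩⟩]dx, the derivatives of v⁰, v³ and of the products v⁰φ⁰, v³φ³ being weak derivatives. -/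

import Mathlib

noncomputable section

open MeasureTheory Finset

namespace EMPaper

abbrev Pt (n : ℕ) := Fin n → ℝ
abbrev GF (n : ℕ) := Finset (Fin n) → ℂ
abbrev Form (n : ℕ) := Pt n → GF n

variable {n : ℕ}

def msgn (I J : Finset (Fin n)) : ℂ :=
  (-1 : ℂ) ^ (((I ×ˢ J).filter fun p => p.2 < p.1).card)

def wedge (u v : GF n) : GF n := fun S =>
  ∑ I ∈ S.powerset, msgn I (S \ I) * u I * v (S \ I)

def vee (v u : GF n) : GF n := fun I =>
  ∑ J ∈ (univ \ I).powerset, msgn I J * v J * u (I ∪ J)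

def ginner (u v : GF n) : ℂ := ∑ S : Finset (Fin n), u S * v S

def gconj (u : GF n) : GF n := fun S => (starRingEnd ℂ) (u S)

def proj (l : ℕ) (u : GF n) : GF n := fun S => if S.card = l then u S else 0

def IsGrade (l : ℕ) (u : GF n) : Prop := ∀ S : Finset (Fin n), S.card ≠ l → u S = 0

def dxe (j : Fin n) : GF n := fun S => if S = {j} then 1 else 0

def oneG (c : Fin n → ℂ) : GF n := fun S => ∑ j, if S = {j} then c j else 0

def altSign (u : GF n) : GF n := fun S => (-1 : ℂ) ^ S.card * u S

def gd (D : Fin n → GF n) : GF n := fun S => ∑ j, wedge (dxe j) (D j) S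

def gdel (D : Fin n → GF n) : GF n := fun S =>
  (-1 : ℂ) ^ (S.card + 1) * ∑ j, vee (dxe j) (D j) S

def pd (j : Fin n) (f : Pt n → ℂ) : Pt n → ℂ := fun x => fderiv ℝ f x (Pi.single j 1)

def Dcl (φ : Form n) : Fin n → Form n := fun j x S => pd j (fun y => φ y S) x

def IsTest (φ : Pt n → ℂ) : Prop := ContDiff ℝ (⊤ : ℕ∞) φ ∧ HasCompactSupport φ

def TestForm (φ : Form n) : Prop := ∀ S : Finset (Fin n), IsTest fun x => φ x S

def L2loc (f : Pt n → ℂ) : Prop :=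
  AEStronglyMeasurable f (volume : Measure (Pt n)) ∧
    ∀ K : Set (Pt n), IsCompact K → IntegrableOn (fun x => ‖f x‖ ^ 2) K volume

def HasWeakPD (j : Fin n) (f g : Pt n → ℂ) : Prop :=
  ∀ φ : Pt n → ℂ, IsTest φ → ∫ x, g x * φ x = -∫ x, f x * pd j φ x

def H1locWith (w : Form n) (Dw : Fin n → Form n) : Prop :=
  (∀ S : Finset (Fin n), L2loc fun x => w x S) ∧
    (∀ (j : Fin n) (S : Finset (Fin n)),
      HasWeakPD j (fun x => w x S) fun x => Dw j x S) ∧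
    ∀ (j : Fin n) (S : Finset (Fin n)), L2loc fun x => Dw j x S

/-! The three-dimensional electromagnetic setting. -/

/-- The data of the medium: frequency `ω`, constants `ε₀, μ₀` and `C¹` coefficients
`ε, σ, μ` with `ε ≥ ε₀ > 0`, `μ ≥ μ₀ > 0`, `σ ≥ 0`. -/
structure Coeffs where
  ω : ℝ
  ε₀ : ℝ
  μ₀ : ℝ
  εf : Pt 3 → ℝ
  σf : Pt 3 → ℝ
  μf : Pt 3 → ℝ
  hω : 0 < ω
  hε₀ : 0 < ε₀
  hμ₀ : 0 < μ₀
  hεC1 : ContDiff ℝ 1 εf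
  hσC1 : ContDiff ℝ 1 σf
  hμC1 : ContDiff ℝ 1 μf
  hεge : ∀ x, ε₀ ≤ εf x
  hμge : ∀ x, μ₀ ≤ μf x
  hσge : ∀ x, 0 ≤ σf x

namespace Coeffs

variable (C : Coeffs)

/-- `γ = ε + iσ/ω`. -/
def γ : Pt 3 → ℂ := fun x => (C.εf x : ℂ) + Complex.I * (C.σf x : ℂ) / (C.ω : ℂ)

/-- `a = (1/2) Log γ`. -/
def a : Pt 3 → ℂ := fun x => (1 / 2 : ℂ) * Complex.log (C.γ x)

/-- `b = (1/2) Log μ`. -/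
def b : Pt 3 → ℂ := fun x => (1 / 2 : ℂ) * Complex.log ((C.μf x : ℂ))

/-- `γ^{1/2} = e^a`. -/
def sg : Pt 3 → ℂ := fun x => Complex.exp (C.a x)

/-- `μ^{1/2} = e^b`. -/
def sm : Pt 3 → ℂ := fun x => Complex.exp (C.b x)

/-- The one-form `da`. -/
def da : Form 3 := fun x => oneG fun j => pd j C.a x

/-- The one-form `db`. -/
def db : Form 3 := fun x => oneG fun j => pd j C.b x

/-- The one-form `d(γ^{1/2} μ^{1/2})`. -/
def dsgm : Form 3 := fun x => oneG fun j => pd j (fun y => C.sg y * C.sm y) x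

/-- The zeroth order coefficient `iω γ^{1/2} μ^{1/2}`. -/
def c0 : Pt 3 → ℂ := fun x => Complex.I * (C.ω : ℂ) * C.sg x * C.sm x

end Coeffs

/-- The zeroth order part of `P(γ,μ,ω)` at a point, given the values `A = da`, `B = db`
and `c = iωγ^{1/2}μ^{1/2}` there:
`da∧v¹ + da∨(v¹+v³) + db∧(v⁰+v²) − db∨v² + iωγ^{1/2}μ^{1/2} v`. -/
def P0 (A B : GF 3) (c : ℂ) (v : GF 3) : GF 3 :=
  wedge A (proj 1 v) + vee A (proj 1 v + proj 3 v) + wedge B (proj 0 v + proj 2 v)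
    - vee B (proj 2 v) + c • v

/-- The zeroth order part of `P(γ,μ,ω)^t` at a point:
`db∧v¹ + db∨(v¹+v³) + da∧(v⁰+v²) − da∨v² + iωγ^{1/2}μ^{1/2} v`. -/
def P0t (A B : GF 3) (c : ℂ) (v : GF 3) : GF 3 :=
  wedge B (proj 1 v) + vee B (proj 1 v + proj 3 v) + wedge A (proj 0 v + proj 2 v)
    - vee A (proj 2 v) + c • v

/-- `P(γ,μ,ω)v` at a point, computed from the partial derivatives `D j = ∂_j v`. -/
def Pfull (A B : GF 3) (c : ℂ) (D : Fin 3 → GF 3) (v : GF 3) : GF 3 :=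
  (gd fun j => altSign (D j)) + (gdel fun j => altSign (D j)) + P0 A B c v

/-- `P(γ,μ,ω)^t v` at a point, computed from the partial derivatives `D j = ∂_j v`. -/
def Ptfull (A B : GF 3) (c : ℂ) (D : Fin 3 → GF 3) (v : GF 3) : GF 3 :=
  -((gd fun j => altSign (D j)) + (gdel fun j => altSign (D j))) + P0t A B c v

/-- `v` is a weak solution of `P(γ,μ,ω)v = 0` on `ℝ³`. -/
def IsWeakSolP (C : Coeffs) (v : Form 3) : Prop :=
  ∀ φ : Form 3, TestForm φ →
    (∫ x, ginner (altSign (v x))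
        ((gd fun j => Dcl φ j x) + gdel fun j => Dcl φ j x))
      + (∫ x, ginner (P0 (C.da x) (C.db x) (C.c0 x) (v x)) (φ x)) = 0

/-- `v` is a weak solution of `P(γ,μ,ω)^t v = 0` on `ℝ³`. -/
def IsWeakSolPt (C : Coeffs) (v : Form 3) : Prop :=
  ∀ φ : Form 3, TestForm φ →
    (∫ x, ginner (-altSign (v x))
        ((gd fun j => Dcl φ j x) + gdel fun j => Dcl φ j x))
      + (∫ x, ginner (P0t (C.da x) (C.db x) (C.c0 x) (v x)) (φ x)) = 0

/-- The components of the Hodge star of the 2-form part: `∗(dx²∧dx³) = dx¹`,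
`∗(dx³∧dx¹) = dx²`, `∗(dx¹∧dx²) = dx³`. -/
def star2 (u : GF 3) : Fin 3 → ℂ := fun k =>
  if k = 0 then u {1, 2} else if k = 1 then -u {0, 2} else u {0, 1}

/-- `⟨c, D*(u⊙v)⟩` for 1-forms with components `u, v` and partial derivatives
`du j k = ∂_j u_k`, `dv j k = ∂_j v_k`, where
`D*(u⊙v) = −Σ_k (Σ_j ∂_j(u_j v_k + u_k v_j)) dx^k`. -/
def dstarPair (c u v : Fin 3 → ℂ) (du dv : Fin 3 → Fin 3 → ℂ) : ℂ :=
  ∑ k, c k * (-(∑ j, (du j j * v k + u j * dv j k + du j k * v j + u k * dv j j)))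

/-- The pairing `⟨Q(γ,μ,ω)w, φ⟩`, where `Dw` is the family of weak partial derivatives
of `w` and `φ` is a smooth compactly supported graded form.  The weak derivatives of the
scalar products and of the symmetric tensor products appearing in `Q` are expanded by
the Leibniz rule. -/
def Qpair (C : Coeffs) (w : Form 3) (Dw : Fin 3 → Form 3) (φ : Form 3) : ℂ :=
  -(∫ x, (C.ω : ℂ) ^ 2 * (C.γ x * (C.μf x : ℂ) - ((C.ε₀ * C.μ₀ : ℝ) : ℂ))
      * ginner (w x) (φ x))
  + (∫ x, ginner ((2 * Complex.I * (C.ω : ℂ)) •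
      (vee (C.dsgm x) (proj 1 (w x) + proj 3 (w x))
        + wedge (C.dsgm x) (proj 0 (w x) + proj 2 (w x)))) (φ x))
  + (∫ x, ginner (C.da x) (C.da x)
        * ginner (proj 0 (w x) + proj 2 (w x)) (proj 0 (φ x) + proj 2 (φ x))
      + ginner (C.db x) (C.db x)
        * ginner (proj 1 (w x) + proj 3 (w x)) (proj 1 (φ x) + proj 3 (φ x)))
  + (∫ x,
      (∑ j, pd j C.a x *
        (ginner (proj 2 (Dw j x) - proj 0 (Dw j x)) (proj 0 (φ x) + proj 2 (φ x))
          + ginner (proj 2 (w x) - proj 0 (w x)) (proj 0 (Dcl φ j x) + proj 2 (Dcl φ j x))))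
      + ∑ j, pd j C.b x *
        (ginner (proj 1 (Dw j x) - proj 3 (Dw j x)) (proj 1 (φ x) + proj 3 (φ x))
          + ginner (proj 1 (w x) - proj 3 (w x)) (proj 1 (Dcl φ j x) + proj 3 (Dcl φ j x))))
  + (∫ x, dstarPair (fun k => pd k C.b x) (fun j => w x {j}) (fun j => φ x {j})
      (fun j k => Dw j x {k}) (fun j k => Dcl φ j x {k}))
  + (∫ x, dstarPair (fun k => pd k C.a x) (star2 (w x)) (star2 (φ x))
      (fun j k => star2 (Dw j x) k) (fun j k => star2 (Dcl φ j x) k))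

/-- The pairing `⟨Q̃(γ,μ,ω)w, φ⟩`. -/
def Qtpair (C : Coeffs) (w : Form 3) (Dw : Fin 3 → Form 3) (φ : Form 3) : ℂ :=
  -(∫ x, (C.ω : ℂ) ^ 2 * (C.γ x * (C.μf x : ℂ) - ((C.ε₀ * C.μ₀ : ℝ) : ℂ))
      * ginner (w x) (φ x))
  + (∫ x, ginner ((-(2 * Complex.I * (C.ω : ℂ))) • vee (C.dsgm x) (proj 2 (w x))
      + (2 * Complex.I * (C.ω : ℂ)) • wedge (C.dsgm x) (proj 1 (w x))) (φ x))
  + (∫ x, ginner (C.db x) (C.db x)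
        * ginner (proj 0 (w x) + proj 2 (w x)) (proj 0 (φ x) + proj 2 (φ x))
      + ginner (C.da x) (C.da x)
        * ginner (proj 1 (w x) + proj 3 (w x)) (proj 1 (φ x) + proj 3 (φ x)))
  + (∫ x,
      (∑ j, pd j C.b x *
        (ginner (proj 0 (Dw j x) - proj 2 (Dw j x)) (proj 0 (φ x) + proj 2 (φ x))
          + ginner (proj 0 (w x) - proj 2 (w x)) (proj 0 (Dcl φ j x) + proj 2 (Dcl φ j x))))
      + ∑ j, pd j C.a x *
        (ginner (proj 3 (Dw j x) - proj 1 (Dw j x)) (proj 1 (φ x) + proj 3 (φ x))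
          + ginner (proj 3 (w x) - proj 1 (w x)) (proj 1 (Dcl φ j x) + proj 3 (Dcl φ j x))))
  - (∫ x, dstarPair (fun k => pd k C.a x) (fun j => w x {j}) (fun j => φ x {j})
      (fun j k => Dw j x {k}) (fun j k => Dcl φ j x {k}))
  - (∫ x, dstarPair (fun k => pd k C.b x) (star2 (w x)) (star2 (φ x))
      (fun j k => star2 (Dw j x) k) (fun j k => star2 (Dcl φ j x) k))

/-- The pairing `⟨q̃(γ,μ,ω)(v⁰+v³), φ⟩` for `φ = φ⁰ + φ³`, where `Dv` is the family of
weak partial derivatives of `v`. -/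
def qtPair (C : Coeffs) (v : Form 3) (Dv : Fin 3 → Form 3) (φ : Form 3) : ℂ :=
  -(∫ x, (C.ω : ℂ) ^ 2 * (C.γ x * (C.μf x : ℂ) - ((C.ε₀ * C.μ₀ : ℝ) : ℂ))
      * ginner (proj 0 (v x) + proj 3 (v x)) (φ x))
  + ∫ x, ginner (C.db x) (C.db x) * (v x ∅ * φ x ∅)
      + ginner (C.da x) (C.da x) * (v x univ * φ x univ)
      + (∑ j, pd j C.b x * (Dv j x ∅ * φ x ∅ + v x ∅ * Dcl φ j x ∅))
      + ∑ j, pd j C.a x * (Dv j x univ * φ x univ + v x univ * Dcl φ j x univ)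

/-! Analytic preliminaries. -/

/-- Continuous compactly supported. -/
def CC (ψ : Pt n → ℂ) : Prop := Continuous ψ ∧ HasCompactSupport ψ

/-- `C¹` compactly supported. -/
def C1c (ψ : Pt n → ℂ) : Prop := ContDiff ℝ 1 ψ ∧ HasCompactSupport ψ

lemma L2loc.li {f : Pt n → ℂ} (h : L2loc f) : LocallyIntegrable f volume := by
  rw [locallyIntegrable_iff]
  intro K hK
  have h1 : IntegrableOn (fun x => 1 + ‖f x‖ ^ 2) K volume :=
    (integrableOn_const (hK.measure_lt_top.ne)).add (h.2 K hK)
  refine Integrable.mono' h1 h.1.restrict (Filter.Eventually.of_forall fun x => ?_)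
  nlinarith [sq_nonneg (‖f x‖ - 1), norm_nonneg (f x)]

lemma li_int {f ψ : Pt n → ℂ} (h : LocallyIntegrable f volume) (hψ : CC ψ) :
    Integrable (fun x => f x * ψ x) volume := by
  simpa [smul_eq_mul] using h.integrable_smul_right_of_hasCompactSupport hψ.1 hψ.2

lemma li_mul {f c : Pt n → ℂ} (h : LocallyIntegrable f volume) (hc : Continuous c) :
    LocallyIntegrable (fun x => c x * f x) volume := by
  rw [locallyIntegrable_iff]
  intro K hK
  exact ((locallyIntegrable_iff.1 h) K hK).continuousOn_mul hc.continuousOn hK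

lemma CC.mul_left {c ψ : Pt n → ℂ} (hc : Continuous c) (h : CC ψ) : CC fun x => c x * ψ x :=
  ⟨hc.mul h.1, h.2.mul_left⟩

lemma CC.add {c ψ : Pt n → ℂ} (hc : CC c) (h : CC ψ) : CC fun x => c x + ψ x :=
  ⟨hc.1.add h.1, hc.2.add h.2⟩

lemma C1c.cc {ψ : Pt n → ℂ} (h : C1c ψ) : CC ψ := ⟨h.1.continuous, h.2⟩

lemma pd_cont {f : Pt n → ℂ} (h : ContDiff ℝ 1 f) (j : Fin n) : Continuous (pd j f) :=
  (h.continuous_fderiv one_ne_zero).clm_apply continuous_const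

lemma C1c.pd {ψ : Pt n → ℂ} (h : C1c ψ) (j : Fin n) : CC (pd j ψ) :=
  ⟨pd_cont h.1 j, h.2.fderiv_apply ℝ _⟩

lemma IsTest.c1c {ψ : Pt n → ℂ} (h : IsTest ψ) : C1c ψ :=
  ⟨h.1.of_le (by exact_mod_cast le_top), h.2⟩

lemma IsTest.pd {ψ : Pt n → ℂ} (h : IsTest ψ) (j : Fin n) : IsTest (pd j ψ) := by
  refine ⟨?_, h.2.fderiv_apply ℝ _⟩
  exact (h.1.fderiv_right (m := (⊤ : ℕ∞)) (by simp)).clm_apply contDiff_const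

lemma C1c.mul_left {c ψ : Pt n → ℂ} (hc : ContDiff ℝ 1 c) (h : C1c ψ) :
    C1c fun x => c x * ψ x :=
  ⟨hc.mul h.1, h.2.mul_left⟩

lemma pd_mul {f g : Pt n → ℂ} (hf : ContDiff ℝ 1 f) (hg : ContDiff ℝ 1 g) (j : Fin n)
    (x : Pt n) : pd j (fun y => f y * g y) x = pd j f x * g x + f x * pd j g x := by
  unfold pd
  rw [fderiv_fun_mul (hf.differentiable one_ne_zero x) (hg.differentiable one_ne_zero x)]
  simp [smul_eq_mul]
  ring

lemma pd_comm {ψ : Pt n → ℂ} (h : IsTest ψ) (j k : Fin n) (x : Pt n) :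
    pd j (pd k ψ) x = pd k (pd j ψ) x := by
  have hd : Differentiable ℝ (fderiv ℝ ψ) :=
    (h.1.fderiv_right (m := (⊤ : ℕ∞)) (by simp)).differentiable (by simp)
  have key : ∀ a b : Fin n, pd a (pd b ψ) x
      = fderiv ℝ (fderiv ℝ ψ) x (Pi.single a 1) (Pi.single b 1) := by
    intro a b
    unfold pd
    rw [fderiv_clm_apply (hd x) (differentiableAt_const _)]
    simp
  rw [key, key]
  have hs : IsSymmSndFDerivAt ℝ ψ x :=
    h.1.contDiffAt.isSymmSndFDerivAt (by
      simp only [minSmoothness_of_isRCLikeNormedField]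
      exact WithTop.coe_le_coe.2 (le_top (a := (2 : ℕ∞))))
  exact hs _ _

/-- Mollification. -/
def moll (k : ℕ) : ContDiffBump (0 : Pt n) where
  rIn := 1 / (2 * ((k : ℝ) + 1))
  rOut := 1 / ((k : ℝ) + 1)
  rIn_pos := by positivity
  rIn_lt_rOut := by
    apply one_div_lt_one_div_of_lt
    · positivity
    · have : (0 : ℝ) ≤ k := Nat.cast_nonneg k
      linarith

open scoped Convolution in
def mollify (k : ℕ) (h : Pt n → ℂ) : Pt n → ℂ :=
  ((moll k).normed volume ⋆[ContinuousLinearMap.lsmul ℝ ℝ, volume] h)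

lemma moll_rOut_le (k : ℕ) : (moll (n := n) k).rOut ≤ 1 := by
  have : (0 : ℝ) ≤ k := Nat.cast_nonneg k
  change 1 / ((k : ℝ) + 1) ≤ 1
  rw [div_le_one (by positivity)]
  linarith

lemma mollify_zero {h : Pt n → ℂ} (k : ℕ) {x : Pt n}
    (hx : x ∉ Metric.cthickening 1 (tsupport h)) : mollify k h x = 0 := by
  have h0 : ∀ y, dist y x ≤ 1 → h y = 0 := by
    intro y hy
    by_contra hne
    apply hx
    exact Metric.mem_cthickening_of_dist_le x y 1 _ (subset_tsupport _ hne) (by rwa [dist_comm])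
  have hx0 : h x = 0 := h0 x (by simp)
  unfold mollify
  rw [ContDiffBump.normed_convolution_eq_right, hx0]
  intro y hy
  rw [hx0]
  exact h0 y ((Metric.mem_ball.1 hy).le.trans (moll_rOut_le k))

lemma mollify_test {ψ : Pt n → ℂ} (h : CC ψ) (k : ℕ) : IsTest (mollify k ψ) := by
  constructor
  · exact HasCompactSupport.contDiff_convolution_left _ (moll k).hasCompactSupport_normed
      (moll k).contDiff_normed h.1.locallyIntegrable
  · exact HasCompactSupport.convolution _ (moll k).hasCompactSupport_normed h.2

lemma mollify_pd {ψ : Pt n → ℂ} (h : C1c ψ) (k : ℕ) (j : Fin n) :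
    pd j (mollify k ψ) = mollify k (pd j ψ) := by
  funext x
  have hl : LocallyIntegrable ((moll (n := n) k).normed volume) volume :=
    ((moll k).contDiff_normed (n := 0)).continuous.locallyIntegrable
  unfold pd mollify
  rw [(h.2.hasFDerivAt_convolution_right _ hl h.1 x).fderiv,
    convolution_precompR_apply _ hl (h.2.fderiv ℝ) (h.1.continuous_fderiv one_ne_zero)]

open Filter Topology in
lemma mollify_tendsto {f ψ : Pt n → ℂ} (hf : LocallyIntegrable f volume) (h : CC ψ) :
    Tendsto (fun k => ∫ x, f x * mollify k ψ x) atTop (𝓝 (∫ x, f x * ψ x)) := by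
  obtain ⟨M, hM⟩ := h.2.exists_bound_of_continuous h.1
  set K := Metric.cthickening 1 (tsupport ψ) with hK
  have hKc : IsCompact K := IsCompact.cthickening h.2
  have hM0 : 0 ≤ M := (norm_nonneg _).trans (hM 0)
  refine tendsto_integral_of_dominated_convergence
    (fun x => K.indicator (fun x => ‖f x‖ * (3 * M)) x) ?_ ?_ ?_ ?_
  · intro k
    exact hf.aestronglyMeasurable.mul (mollify_test h k).1.continuous.aestronglyMeasurable
  · rw [integrable_indicator_iff hKc.measurableSet]
    exact ((locallyIntegrable_iff.1 hf K hKc).norm).mul_const _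
  · intro k
    refine Eventually.of_forall fun x => ?_
    by_cases hx : x ∈ K
    · rw [Set.indicator_of_mem hx, norm_mul]
      refine mul_le_mul_of_nonneg_left ?_ (norm_nonneg _)
      have hd : dist (mollify k ψ x) (ψ x) ≤ 2 * M := by
        apply ContDiffBump.dist_normed_convolution_le
        · exact h.1.aestronglyMeasurable
        · intro y _
          rw [dist_eq_norm]
          exact (norm_sub_le _ _).trans (by linarith [hM y, hM x])
      rw [dist_eq_norm] at hd
      have := norm_add_le (mollify k ψ x - ψ x) (ψ x)
      rw [sub_add_cancel] at this
      linarith [hM x]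
    · rw [Set.indicator_of_notMem hx, mollify_zero k hx]
      simp
  · refine Eventually.of_forall fun x => ?_
    refine Tendsto.const_mul _ ?_
    apply ContDiffBump.convolution_tendsto_right_of_continuous
    · exact tendsto_one_div_add_atTop_nhds_zero_nat
    · exact h.1

/-- Weak derivatives may be tested against `C¹` functions. -/
lemma weak_C1 {f g : Pt n → ℂ} {j : Fin n} (hf : LocallyIntegrable f volume)
    (hg : LocallyIntegrable g volume) (hw : HasWeakPD j f g) {ψ : Pt n → ℂ} (h : C1c ψ) :
    ∫ x, g x * ψ x = -∫ x, f x * pd j ψ x := by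
  have h1 := mollify_tendsto hg h.cc
  have h2 := (mollify_tendsto hf (h.pd j)).neg
  refine tendsto_nhds_unique h1 (h2.congr fun k => ?_)
  rw [hw _ (mollify_test h.cc k), mollify_pd h]

lemma weak_sym {f gj gk : Pt n → ℂ} {j k : Fin n}
    (hgj : LocallyIntegrable gj volume) (hgk : LocallyIntegrable gk volume)
    (hj : HasWeakPD j f gj) (hk : HasWeakPD k f gk) {ψ : Pt n → ℂ} (h : C1c ψ) :
    ∫ x, gj x * pd k ψ x = ∫ x, gk x * pd j ψ x := by
  have h1 := mollify_tendsto hgj (h.pd k)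
  have h2 := mollify_tendsto hgk (h.pd j)
  refine tendsto_nhds_unique h1 (h2.congr fun m => ?_)
  have ht := mollify_test h.cc m
  rw [← mollify_pd h, ← mollify_pd h, hj _ (ht.pd k), hk _ (ht.pd j)]
  simp_rw [pd_comm ht k j]

/-- Integrable with zero integral. -/
def ZI (F : Pt n → ℂ) : Prop := Integrable F volume ∧ ∫ x, F x = 0

lemma ZI.add {F G : Pt n → ℂ} (hF : ZI F) (hG : ZI G) : ZI fun x => F x + G x :=
  ⟨hF.1.add hG.1, by rw [integral_add hF.1 hG.1, hF.2, hG.2, add_zero]⟩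

lemma ZI.sub {F G : Pt n → ℂ} (hF : ZI F) (hG : ZI G) : ZI fun x => F x - G x :=
  ⟨hF.1.sub hG.1, by rw [integral_sub hF.1 hG.1, hF.2, hG.2, sub_zero]⟩

lemma ZI_div {f g : Pt n → ℂ} {j : Fin n} (hf : LocallyIntegrable f volume)
    (hg : LocallyIntegrable g volume) (hw : HasWeakPD j f g) {ψ : Pt n → ℂ} (h : C1c ψ) :
    ZI fun x => g x * ψ x + f x * pd j ψ x := by
  refine ⟨(li_int hg h.cc).add (li_int hf (h.pd j)), ?_⟩
  rw [integral_add (li_int hg h.cc) (li_int hf (h.pd j)), weak_C1 hf hg hw h]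
  ring

lemma ZI_curl {f gj gk b φ : Pt n → ℂ} {j k : Fin n} (hf : LocallyIntegrable f volume)
    (hgj : LocallyIntegrable gj volume) (hgk : LocallyIntegrable gk volume)
    (hj : HasWeakPD j f gj) (hk : HasWeakPD k f gk) (hb : ContDiff ℝ 1 b) (hφ : IsTest φ) :
    ZI fun x => (gj x - f x * pd j b x) * (pd k φ x + φ x * pd k b x)
      - (gk x - f x * pd k b x) * (pd j φ x + φ x * pd j b x) := by
  have hz0 : ZI fun x => gj x * pd k φ x - gk x * pd j φ x := by
    refine ⟨(li_int hgj (hφ.c1c.pd k)).sub (li_int hgk (hφ.c1c.pd j)), ?_⟩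
    rw [integral_sub (li_int hgj (hφ.c1c.pd k)) (li_int hgk (hφ.c1c.pd j)),
      weak_sym hgj hgk hj hk hφ.c1c, sub_self]
  have hbφ : C1c fun x => b x * φ x := C1c.mul_left hb hφ.c1c
  have hz1 : ZI fun x => gj x * pd k (fun x => b x * φ x) x
      - gk x * pd j (fun x => b x * φ x) x := by
    refine ⟨(li_int hgj (hbφ.pd k)).sub (li_int hgk (hbφ.pd j)), ?_⟩
    rw [integral_sub (li_int hgj (hbφ.pd k)) (li_int hgk (hbφ.pd j)),
      weak_sym hgj hgk hj hk hbφ, sub_self]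
  have hz2 := ZI_div hf hgj hj (C1c.mul_left hb (hφ.pd k).c1c)
  have hz3 := ZI_div hf hgk hk (C1c.mul_left hb (hφ.pd j).c1c)
  have := (hz0.add hz1).sub (hz2.sub hz3)
  convert this using 2 with x
  rw [pd_mul hb hφ.c1c.1, pd_mul hb hφ.c1c.1, pd_mul hb (hφ.pd k).c1c.1,
    pd_mul hb (hφ.pd j).c1c.1, pd_comm hφ j k]
  ring

lemma three {f g : Fin 3 → Pt n → ℂ} {i : Fin 3 → Fin n} {s : Fin 3 → ℂ} {Z : Pt n → ℂ}
    (hf : ∀ k, LocallyIntegrable (f k) volume) (hg : ∀ k, LocallyIntegrable (g k) volume)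
    (hw : ∀ k, HasWeakPD (i k) (f k) (g k)) (hZ : LocallyIntegrable Z volume)
    (h : ∀ φ : Pt n → ℂ, IsTest φ →
      (∫ x, ∑ k, s k * (f k x * pd (i k) φ x)) + ∫ x, Z x * φ x = 0) :
    ∀ᵐ x ∂(volume : Measure (Pt n)), Z x = ∑ k, s k * g k x := by
  have hG : LocallyIntegrable (fun x => ∑ k, s k * g k x) volume := by
    have := locallyIntegrable_finsetSum (μ := (volume : Measure (Pt n))) Finset.univ
      (f := fun k x => s k * g k x) (fun k _ => li_mul (hg k) continuous_const)
    simpa [Finset.sum_fn] using this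
  have key := ae_eq_zero_of_integral_contDiff_smul_eq_zero (hZ.sub hG) (by
    intro η hη hηc
    have ht : IsTest fun x => (η x : ℂ) :=
      ⟨Complex.ofRealCLM.contDiff.comp hη, hηc.comp_left (g := fun r : ℝ => (r : ℂ)) (by simp)⟩
    have h1 := h _ ht
    rw [integral_finsetSum _ (fun k _ => (li_int (hf k) (ht.c1c.pd _)).const_mul _)] at h1
    simp_rw [integral_const_mul] at h1
    have h2 : ∀ k, ∫ x, f k x * pd (i k) (fun x => (η x : ℂ)) x = -∫ x, g k x * (η x : ℂ) :=
      fun k => by rw [hw k _ ht, neg_neg]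
    simp_rw [h2] at h1
    have h3 : ∫ x, (∑ k, s k * g k x) * (η x : ℂ) = ∑ k, s k * ∫ x, g k x * (η x : ℂ) := by
      simp_rw [← integral_const_mul]
      rw [← integral_finsetSum _ (fun k _ => (li_int (hg k) ht.c1c.cc).const_mul _)]
      congr 1
      funext x
      rw [Finset.sum_mul]
      exact Finset.sum_congr rfl fun k _ => by ring
    have h4 : ∀ x, η x • (Z - fun x => ∑ k, s k * g k x) x
        = Z x * (η x : ℂ) - (∑ k, s k * g k x) * (η x : ℂ) := by
      intro x
      simp only [Pi.sub_apply, Complex.real_smul]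
      ring
    simp_rw [h4]
    rw [integral_sub (li_int hZ ht.c1c.cc) (li_int hG ht.c1c.cc), h3]
    simp only [mul_neg, Finset.sum_neg_distrib] at h1
    linear_combination h1)
  filter_upwards [key] with x hx
  simpa [sub_eq_zero] using hx

/-! Algebra of graded forms in dimension three. -/

lemma wedge_oneG (a : Fin n → ℂ) (u : GF n) (S : Finset (Fin n)) :
    wedge (oneG a) u S
      = ∑ j, if j ∈ S then msgn {j} (S \ {j}) * a j * u (S \ {j}) else 0 := by
  unfold wedge oneG
  simp_rw [Finset.mul_sum, Finset.sum_mul]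
  rw [Finset.sum_comm]
  refine Finset.sum_congr rfl fun j _ => ?_
  simp only [mul_ite, mul_zero, ite_mul, zero_mul]
  rw [Finset.sum_ite_eq' S.powerset {j}]
  simp

lemma vee_oneG (a : Fin n → ℂ) (u : GF n) (S : Finset (Fin n)) :
    vee (oneG a) u S
      = ∑ j, if j ∈ S then 0 else msgn S {j} * a j * u (S ∪ {j}) := by
  unfold vee oneG
  simp_rw [Finset.mul_sum, Finset.sum_mul]
  rw [Finset.sum_comm]
  refine Finset.sum_congr rfl fun j _ => ?_
  simp only [mul_ite, mul_zero, ite_mul, zero_mul]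
  rw [Finset.sum_ite_eq' (univ \ S).powerset {j}]
  simp

lemma dxe_eq (j : Fin n) : dxe j = oneG (Pi.single j 1) := by
  funext S
  unfold dxe oneG
  rw [Finset.sum_eq_single j]
  · simp
  · intro k _ hk
    simp [Pi.single_eq_of_ne hk]
  · simp

lemma msgn_of {I J : Finset (Fin n)} {m : ℕ}
    (h : ((I ×ˢ J).filter fun p => p.2 < p.1).card = m) : msgn I J = (-1) ^ m := by
  unfold msgn
  rw [h]

lemma sum_all (F : Finset (Fin 3) → ℂ) :
    ∑ S, F S = F ∅ + F {0} + F {1} + F {2} + F {0, 1} + F {0, 2} + F {1, 2} + F univ := by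
  rw [show (univ : Finset (Finset (Fin 3))) = {∅, {0}, {1}, {2}, {0, 1}, {0, 2}, {1, 2}, univ}
    from by decide]
  repeat rw [Finset.sum_insert (by decide)]
  rw [Finset.sum_singleton]
  ring

section comps

variable (a : Fin 3 → ℂ) (u : GF 3)

lemma w_e : wedge (oneG a) u ∅ = 0 := by simp [wedge_oneG]

lemma w_0 : wedge (oneG a) u {0} = a 0 * u ∅ := by
  rw [wedge_oneG, Fin.sum_univ_three, if_pos (by decide), if_neg (by decide), if_neg (by decide),
    msgn_of (m := 0) (by decide), show ({0} \ {0} : Finset (Fin 3)) = ∅ by decide]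
  ring

lemma w_1 : wedge (oneG a) u {1} = a 1 * u ∅ := by
  rw [wedge_oneG, Fin.sum_univ_three, if_neg (by decide), if_pos (by decide), if_neg (by decide),
    msgn_of (m := 0) (by decide), show ({1} \ {1} : Finset (Fin 3)) = ∅ by decide]
  ring

lemma w_2 : wedge (oneG a) u {2} = a 2 * u ∅ := by
  rw [wedge_oneG, Fin.sum_univ_three, if_neg (by decide), if_neg (by decide), if_pos (by decide),
    msgn_of (m := 0) (by decide), show ({2} \ {2} : Finset (Fin 3)) = ∅ by decide]
  ring

lemma w_01 : wedge (oneG a) u {0, 1} = a 0 * u {1} - a 1 * u {0} := by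
  rw [wedge_oneG, Fin.sum_univ_three, if_pos (by decide), if_pos (by decide), if_neg (by decide),
    show ({0, 1} \ {0} : Finset (Fin 3)) = {1} by decide,
    show ({0, 1} \ {1} : Finset (Fin 3)) = {0} by decide,
    msgn_of (I := {0}) (m := 0) (by decide), msgn_of (I := {1}) (m := 1) (by decide)]
  ring

lemma w_02 : wedge (oneG a) u {0, 2} = a 0 * u {2} - a 2 * u {0} := by
  rw [wedge_oneG, Fin.sum_univ_three, if_pos (by decide), if_neg (by decide), if_pos (by decide),
    show ({0, 2} \ {0} : Finset (Fin 3)) = {2} by decide,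
    show ({0, 2} \ {2} : Finset (Fin 3)) = {0} by decide,
    msgn_of (I := {0}) (m := 0) (by decide), msgn_of (I := {2}) (m := 1) (by decide)]
  ring

lemma w_12 : wedge (oneG a) u {1, 2} = a 1 * u {2} - a 2 * u {1} := by
  rw [wedge_oneG, Fin.sum_univ_three, if_neg (by decide), if_pos (by decide), if_pos (by decide),
    show ({1, 2} \ {1} : Finset (Fin 3)) = {2} by decide,
    show ({1, 2} \ {2} : Finset (Fin 3)) = {1} by decide,
    msgn_of (I := {1}) (m := 0) (by decide), msgn_of (I := {2}) (m := 1) (by decide)]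
  ring

lemma w_u : wedge (oneG a) u univ = a 0 * u {1, 2} - a 1 * u {0, 2} + a 2 * u {0, 1} := by
  rw [wedge_oneG, Fin.sum_univ_three, if_pos (by decide), if_pos (by decide), if_pos (by decide),
    show (univ \ {0} : Finset (Fin 3)) = {1, 2} by decide,
    show (univ \ {1} : Finset (Fin 3)) = {0, 2} by decide,
    show (univ \ {2} : Finset (Fin 3)) = {0, 1} by decide,
    msgn_of (I := {0}) (m := 0) (by decide), msgn_of (I := {1}) (m := 1) (by decide),
    msgn_of (I := {2}) (m := 2) (by decide)]
  ring

lemma v_e : vee (oneG a) u ∅ = a 0 * u {0} + a 1 * u {1} + a 2 * u {2} := by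
  rw [vee_oneG, Fin.sum_univ_three, if_neg (by decide), if_neg (by decide), if_neg (by decide)]
  simp [msgn]

lemma v_0 : vee (oneG a) u {0} = a 1 * u {0, 1} + a 2 * u {0, 2} := by
  rw [vee_oneG, Fin.sum_univ_three, if_pos (by decide), if_neg (by decide), if_neg (by decide),
    show ({0} ∪ {1} : Finset (Fin 3)) = {0, 1} by decide,
    show ({0} ∪ {2} : Finset (Fin 3)) = {0, 2} by decide,
    msgn_of (J := {1}) (m := 0) (by decide), msgn_of (J := {2}) (m := 0) (by decide)]
  ring

lemma v_1 : vee (oneG a) u {1} = -a 0 * u {0, 1} + a 2 * u {1, 2} := by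
  rw [vee_oneG, Fin.sum_univ_three, if_neg (by decide), if_pos (by decide), if_neg (by decide),
    show ({1} ∪ {0} : Finset (Fin 3)) = {0, 1} by decide,
    show ({1} ∪ {2} : Finset (Fin 3)) = {1, 2} by decide,
    msgn_of (J := {0}) (m := 1) (by decide), msgn_of (J := {2}) (m := 0) (by decide)]
  ring

lemma v_2 : vee (oneG a) u {2} = -a 0 * u {0, 2} - a 1 * u {1, 2} := by
  rw [vee_oneG, Fin.sum_univ_three, if_neg (by decide), if_neg (by decide), if_pos (by decide),
    show ({2} ∪ {0} : Finset (Fin 3)) = {0, 2} by decide,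
    show ({2} ∪ {1} : Finset (Fin 3)) = {1, 2} by decide,
    msgn_of (J := {0}) (m := 1) (by decide), msgn_of (J := {1}) (m := 1) (by decide)]
  ring

lemma v_01 : vee (oneG a) u {0, 1} = a 2 * u univ := by
  rw [vee_oneG, Fin.sum_univ_three, if_pos (by decide), if_pos (by decide), if_neg (by decide),
    show ({0, 1} ∪ {2} : Finset (Fin 3)) = univ by decide, msgn_of (m := 0) (by decide)]
  ring

lemma v_02 : vee (oneG a) u {0, 2} = -a 1 * u univ := by
  rw [vee_oneG, Fin.sum_univ_three, if_pos (by decide), if_neg (by decide), if_pos (by decide),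
    show ({0, 2} ∪ {1} : Finset (Fin 3)) = univ by decide, msgn_of (m := 1) (by decide)]
  ring

lemma v_12 : vee (oneG a) u {1, 2} = a 0 * u univ := by
  rw [vee_oneG, Fin.sum_univ_three, if_neg (by decide), if_pos (by decide), if_pos (by decide),
    show ({1, 2} ∪ {0} : Finset (Fin 3)) = univ by decide, msgn_of (m := 2) (by decide)]
  ring

lemma v_u : vee (oneG a) u univ = 0 := by simp [vee_oneG]

end comps

lemma ginner_oneG (a b : Fin 3 → ℂ) :
    ginner (oneG a) (oneG b) = a 0 * b 0 + a 1 * b 1 + a 2 * b 2 := by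
  have h0 : ∀ (c : Fin 3 → ℂ) (S : Finset (Fin 3)), (∀ j, S ≠ {j}) → oneG c S = 0 := by
    intro c S h
    simp [oneG, h]
  have h1 : ∀ (c : Fin 3 → ℂ) (k : Fin 3), oneG c {k} = c k := by
    intro c k
    simp [oneG, Finset.singleton_inj]
  unfold ginner
  rw [sum_all, h1, h1, h1, h1, h1, h1, h0 a ∅ (by decide), h0 a {0, 1} (by decide),
    h0 a {0, 2} (by decide), h0 a {1, 2} (by decide), h0 a univ (by decide)]
  ring

/-- Explicit form of the first order pairing. -/
lemma first_order (u : GF 3) (D : Fin 3 → GF 3) :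
    ginner (altSign u) (gd D + gdel D) =
      -(u ∅ * (D 0 {0} + D 1 {1} + D 2 {2}))
      - u {0} * (D 0 ∅ + (D 1 {0, 1} + D 2 {0, 2}))
      - u {1} * (D 1 ∅ + (-D 0 {0, 1} + D 2 {1, 2}))
      - u {2} * (D 2 ∅ + (-D 0 {0, 2} - D 1 {1, 2}))
      + u {0, 1} * (D 0 {1} - D 1 {0} - D 2 univ)
      + u {0, 2} * (D 0 {2} - D 2 {0} + D 1 univ)
      + u {1, 2} * (D 1 {2} - D 2 {1} - D 0 univ)
      - u univ * (D 0 {1, 2} - D 1 {0, 2} + D 2 {0, 1}) := by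
  unfold ginner
  rw [sum_all]
  simp only [altSign, gd, gdel, Pi.add_apply, Fin.sum_univ_three, dxe_eq, w_e, w_0, w_1, w_2,
    w_01, w_02, w_12, w_u, v_e, v_0, v_1, v_2, v_01, v_02, v_12, v_u]
  rw [show (∅ : Finset (Fin 3)).card = 0 by decide, show ({0} : Finset (Fin 3)).card = 1 by decide,
    show ({1} : Finset (Fin 3)).card = 1 by decide, show ({2} : Finset (Fin 3)).card = 1 by decide,
    show ({0, 1} : Finset (Fin 3)).card = 2 by decide,
    show ({0, 2} : Finset (Fin 3)).card = 2 by decide,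
    show ({1, 2} : Finset (Fin 3)).card = 2 by decide,
    show (univ : Finset (Fin 3)).card = 3 by decide]
  simp
  ring

/-- `⟨d·,d·⟩ + ⟨δ·,δ·⟩` on forms of degrees zero and three. -/
lemma second_order (D E : Fin 3 → GF 3)
    (hE : ∀ j S, S ≠ ∅ → S ≠ univ → E j S = 0) :
    ginner (gdel fun j => proj 0 (D j) + proj 3 (D j)) (gdel E)
      + ginner (gd fun j => proj 0 (D j) + proj 3 (D j)) (gd E)
    = (D 0 ∅ * E 0 ∅ + D 1 ∅ * E 1 ∅ + D 2 ∅ * E 2 ∅)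
      + (D 0 univ * E 0 univ + D 1 univ * E 1 univ + D 2 univ * E 2 univ) := by
  have e0 : ∀ j, E j {0} = 0 := fun j => hE j _ (by decide) (by decide)
  have e1 : ∀ j, E j {1} = 0 := fun j => hE j _ (by decide) (by decide)
  have e2 : ∀ j, E j {2} = 0 := fun j => hE j _ (by decide) (by decide)
  have e01 : ∀ j, E j {0, 1} = 0 := fun j => hE j _ (by decide) (by decide)
  have e02 : ∀ j, E j {0, 2} = 0 := fun j => hE j _ (by decide) (by decide)
  have e12 : ∀ j, E j {1, 2} = 0 := fun j => hE j _ (by decide) (by decide)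
  unfold ginner
  rw [sum_all, sum_all]
  simp only [gd, gdel, Fin.sum_univ_three, dxe_eq, w_e, w_0, w_1, w_2,
    w_01, w_02, w_12, w_u, v_e, v_0, v_1, v_2, v_01, v_02, v_12, v_u, e0, e1, e2, e01, e02, e12]
  rw [show (∅ : Finset (Fin 3)).card = 0 by decide, show ({0} : Finset (Fin 3)).card = 1 by decide,
    show ({1} : Finset (Fin 3)).card = 1 by decide, show ({2} : Finset (Fin 3)).card = 1 by decide,
    show ({0, 1} : Finset (Fin 3)).card = 2 by decide,
    show ({0, 2} : Finset (Fin 3)).card = 2 by decide,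
    show ({1, 2} : Finset (Fin 3)).card = 2 by decide,
    show (univ : Finset (Fin 3)).card = 3 by decide]
  simp [proj]
  ring

lemma zeroth_order (v φ : GF 3) (hφ : ∀ S, S ≠ ∅ → S ≠ univ → φ S = 0) :
    ginner (proj 0 v + proj 3 v) φ = v ∅ * φ ∅ + v univ * φ univ := by
  unfold ginner
  rw [sum_all, hφ {0} (by decide) (by decide), hφ {1} (by decide) (by decide),
    hφ {2} (by decide) (by decide), hφ {0, 1} (by decide) (by decide),
    hφ {0, 2} (by decide) (by decide), hφ {1, 2} (by decide) (by decide)]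
  simp [proj]

/-- The components of the zeroth order part. -/
lemma P0_comps (a b : Fin 3 → ℂ) (c : ℂ) (v : GF 3) :
    P0 (oneG a) (oneG b) c v ∅ = a 0 * v {0} + a 1 * v {1} + a 2 * v {2} + c * v ∅ ∧
    P0 (oneG a) (oneG b) c v {0} = b 0 * v ∅ - (b 1 * v {0, 1} + b 2 * v {0, 2}) + c * v {0} ∧
    P0 (oneG a) (oneG b) c v {1} = b 1 * v ∅ - (-b 0 * v {0, 1} + b 2 * v {1, 2}) + c * v {1} ∧
    P0 (oneG a) (oneG b) c v {2} = b 2 * v ∅ - (-b 0 * v {0, 2} - b 1 * v {1, 2}) + c * v {2} ∧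
    P0 (oneG a) (oneG b) c v {0, 1}
      = a 0 * v {1} - a 1 * v {0} + a 2 * v univ + c * v {0, 1} ∧
    P0 (oneG a) (oneG b) c v {0, 2}
      = a 0 * v {2} - a 2 * v {0} + -a 1 * v univ + c * v {0, 2} ∧
    P0 (oneG a) (oneG b) c v {1, 2}
      = a 1 * v {2} - a 2 * v {1} + a 0 * v univ + c * v {1, 2} ∧
    P0 (oneG a) (oneG b) c v univ
      = b 0 * v {1, 2} - b 1 * v {0, 2} + b 2 * v {0, 1} + c * v univ := by
  have k01 : ({0, 1} : Finset (Fin 3)).card = 2 := by decide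
  have k02 : ({0, 2} : Finset (Fin 3)).card = 2 := by decide
  have k12 : ({1, 2} : Finset (Fin 3)).card = 2 := by decide
  simp only [P0, Pi.add_apply, Pi.sub_apply, Pi.smul_apply, smul_eq_mul, w_e, w_0, w_1, w_2,
    w_01, w_02, w_12, w_u, v_e, v_0, v_1, v_2, v_01, v_02, v_12, v_u]
  simp [proj, k01, k02, k12]

/-! Regularity of the coefficients. -/

lemma γ_mem (C : Coeffs) (x : Pt 3) : C.γ x ∈ Complex.slitPlane := by
  left
  have : (C.γ x).re = C.εf x := by
    unfold Coeffs.γ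
    rw [mul_div_assoc, ← Complex.ofReal_div]
    simp
  rw [this]
  exact C.hε₀.trans_le (C.hεge x)

lemma μ_mem (C : Coeffs) (x : Pt 3) : (C.μf x : ℂ) ∈ Complex.slitPlane := by
  left
  simpa using C.hμ₀.trans_le (C.hμge x)

lemma contDiff_ofReal {f : Pt 3 → ℝ} (h : ContDiff ℝ 1 f) : ContDiff ℝ 1 fun x => (f x : ℂ) :=
  Complex.ofRealCLM.contDiff.comp h

lemma contDiff_halfLog {f : Pt 3 → ℂ} (h : ContDiff ℝ 1 f) (hf : ∀ x, f x ∈ Complex.slitPlane) :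
    ContDiff ℝ 1 fun x => (1 / 2 : ℂ) * Complex.log (f x) := by
  refine contDiff_const.mul (contDiff_iff_contDiffAt.2 fun x => ?_)
  exact ((Complex.contDiffAt_log (hf x)).restrict_scalars ℝ).comp x h.contDiffAt

lemma γ_C1 (C : Coeffs) : ContDiff ℝ 1 C.γ := by
  unfold Coeffs.γ
  exact (contDiff_ofReal C.hεC1).add
    ((contDiff_const.mul (contDiff_ofReal C.hσC1)).div_const _)

lemma a_C1 (C : Coeffs) : ContDiff ℝ 1 C.a := contDiff_halfLog (γ_C1 C) (γ_mem C)

lemma b_C1 (C : Coeffs) : ContDiff ℝ 1 C.b :=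
  contDiff_halfLog (contDiff_ofReal C.hμC1) (μ_mem C)

lemma c_C1 (C : Coeffs) : ContDiff ℝ 1 C.c0 := by
  unfold Coeffs.c0 Coeffs.sg Coeffs.sm
  exact (contDiff_const.mul (a_C1 C).cexp).mul (b_C1 C).cexp

lemma exp_half_sq {z : ℂ} (hz : z ≠ 0) : Complex.exp (1 / 2 * Complex.log z) ^ 2 = z := by
  rw [← Complex.exp_nat_mul]
  rw [show ((2 : ℕ) : ℂ) * (1 / 2 * Complex.log z) = Complex.log z by push_cast; ring]
  exact Complex.exp_log hz

lemma c_sq (C : Coeffs) (x : Pt 3) :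
    C.c0 x * C.c0 x = -((C.ω : ℂ) ^ 2 * (C.γ x * (C.μf x : ℂ))) := by
  have h1 : C.sg x ^ 2 = C.γ x := exp_half_sq (Complex.slitPlane_ne_zero (γ_mem C x))
  have h2 : C.sm x ^ 2 = (C.μf x : ℂ) := exp_half_sq (Complex.slitPlane_ne_zero (μ_mem C x))
  unfold Coeffs.c0
  rw [← h1, ← h2]
  linear_combination ((C.ω : ℂ) ^ 2 * C.sg x ^ 2 * C.sm x ^ 2) * Complex.I_sq

lemma pd_cexp {f : Pt n → ℂ} (h : ContDiff ℝ 1 f) (j : Fin n) (x : Pt n) :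
    pd j (fun y => Complex.exp (f y)) x = Complex.exp (f x) * pd j f x := by
  unfold pd
  rw [((h.differentiable one_ne_zero x).hasFDerivAt.cexp).fderiv]
  simp

lemma pd_c (C : Coeffs) (j : Fin 3) (x : Pt 3) :
    pd j C.c0 x = C.c0 x * (pd j C.a x + pd j C.b x) := by
  have h0 : pd j (fun _ : Pt 3 => Complex.I * (C.ω : ℂ)) x = 0 := by
    unfold pd
    simp
  have e : C.c0 = fun y => (Complex.I * (C.ω : ℂ)) *
      (Complex.exp (C.a y) * Complex.exp (C.b y)) := by
    funext y
    unfold Coeffs.c0 Coeffs.sg Coeffs.sm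
    ring
  rw [e, pd_mul contDiff_const ((a_C1 C).cexp.mul (b_C1 C).cexp), h0,
    pd_mul (a_C1 C).cexp (b_C1 C).cexp, pd_cexp (a_C1 C), pd_cexp (b_C1 C)]
  ring

/-! The equation holds almost everywhere, component by component. -/

lemma li_add {f g : Pt n → ℂ} (hf : LocallyIntegrable f volume) (hg : LocallyIntegrable g volume) :
    LocallyIntegrable (fun x => f x + g x) volume := hf.add hg

lemma li_sub {f g : Pt n → ℂ} (hf : LocallyIntegrable f volume) (hg : LocallyIntegrable g volume) :
    LocallyIntegrable (fun x => f x - g x) volume := hf.sub hg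

lemma comp_eq {C : Coeffs} {v : Form 3} {Dv : Fin 3 → Form 3}
    (hv : H1locWith v Dv) (hsol : IsWeakSolP C v) (S : Finset (Fin 3))
    (f : Fin 3 → Finset (Fin 3)) (s : Fin 3 → ℂ)
    (hs : ∀ (u : GF 3) (D : Fin 3 → ℂ),
      ginner (altSign u) ((gd fun j T => if T = S then D j else 0)
        + gdel fun j T => if T = S then D j else 0) = ∑ k, s k * (u (f k) * D k))
    (hZ : LocallyIntegrable (fun x => P0 (C.da x) (C.db x) (C.c0 x) (v x) S) volume) :
    ∀ᵐ x ∂(volume : Measure (Pt 3)),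
      P0 (C.da x) (C.db x) (C.c0 x) (v x) S = ∑ k, s k * Dv k x (f k) := by
  refine three (f := fun k x => v x (f k)) (g := fun k x => Dv k x (f k)) (i := fun k => k)
    (fun k => (hv.1 _).li) (fun k => (hv.2.2 _ _).li) (fun k => hv.2.1 _ _) hZ ?_
  intro φ hφ
  have h := hsol (fun x T => if T = S then φ x else 0) (by
    intro T
    by_cases hT : T = S
    · simpa [hT] using hφ
    · simp only [hT, if_false]
      exact ⟨contDiff_const, HasCompactSupport.zero⟩)
  have hD : ∀ (j : Fin 3) (x : Pt 3), Dcl (fun x T => if T = S then φ x else 0) j x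
      = fun T => if T = S then pd j φ x else 0 := by
    intro j x
    funext T
    by_cases hT : T = S
    · simp [Dcl, hT]
    · simp [Dcl, hT, pd]
  simp_rw [hD] at h
  rw [← h]
  congr 1
  · congr 1
    funext x
    rw [hs (v x) (fun j => pd j φ x)]
  · congr 1
    funext x
    unfold ginner
    simp

lemma all_eqs {C : Coeffs} {v : Form 3} {Dv : Fin 3 → Form 3}
    (hv : H1locWith v Dv) (hsol : IsWeakSolP C v) :
    ∀ᵐ x ∂(volume : Measure (Pt 3)),
      (pd 0 C.a x * v x {0} + pd 1 C.a x * v x {1} + pd 2 C.a x * v x {2} + C.c0 x * v x ∅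
        = -(Dv 0 x {0} + Dv 1 x {1} + Dv 2 x {2})) ∧
      (pd 0 C.b x * v x ∅ - (pd 1 C.b x * v x {0, 1} + pd 2 C.b x * v x {0, 2})
          + C.c0 x * v x {0}
        = -(Dv 0 x ∅ + Dv 1 x {0, 1} + Dv 2 x {0, 2})) ∧
      (pd 1 C.b x * v x ∅ - (-pd 0 C.b x * v x {0, 1} + pd 2 C.b x * v x {1, 2})
          + C.c0 x * v x {1}
        = -(Dv 1 x ∅ - Dv 0 x {0, 1} + Dv 2 x {1, 2})) ∧
      (pd 2 C.b x * v x ∅ - (-pd 0 C.b x * v x {0, 2} - pd 1 C.b x * v x {1, 2})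
          + C.c0 x * v x {2}
        = -(Dv 2 x ∅ - Dv 0 x {0, 2} - Dv 1 x {1, 2})) ∧
      (pd 0 C.a x * v x {1} - pd 1 C.a x * v x {0} + pd 2 C.a x * v x univ
          + C.c0 x * v x {0, 1}
        = Dv 0 x {1} - Dv 1 x {0} - Dv 2 x univ) ∧
      (pd 0 C.a x * v x {2} - pd 2 C.a x * v x {0} + -pd 1 C.a x * v x univ
          + C.c0 x * v x {0, 2}
        = Dv 0 x {2} - Dv 2 x {0} + Dv 1 x univ) ∧
      (pd 1 C.a x * v x {2} - pd 2 C.a x * v x {1} + pd 0 C.a x * v x univ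
          + C.c0 x * v x {1, 2}
        = Dv 1 x {2} - Dv 2 x {1} - Dv 0 x univ) ∧
      (pd 0 C.b x * v x {1, 2} - pd 1 C.b x * v x {0, 2} + pd 2 C.b x * v x {0, 1}
          + C.c0 x * v x univ
        = -(Dv 0 x {1, 2} - Dv 1 x {0, 2} + Dv 2 x {0, 1})) := by
  have ta : ∀ j S, LocallyIntegrable (fun x => pd j C.a x * v x S) volume :=
    fun j S => li_mul (hv.1 S).li (pd_cont (a_C1 C) j)
  have tb : ∀ j S, LocallyIntegrable (fun x => pd j C.b x * v x S) volume :=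
    fun j S => li_mul (hv.1 S).li (pd_cont (b_C1 C) j)
  have tna : ∀ j S, LocallyIntegrable (fun x => -pd j C.a x * v x S) volume :=
    fun j S => li_mul (hv.1 S).li (pd_cont (a_C1 C) j).neg
  have tnb : ∀ j S, LocallyIntegrable (fun x => -pd j C.b x * v x S) volume :=
    fun j S => li_mul (hv.1 S).li (pd_cont (b_C1 C) j).neg
  have tc : ∀ S, LocallyIntegrable (fun x => C.c0 x * v x S) volume :=
    fun S => li_mul (hv.1 S).li (c_C1 C).continuous
  have hP := fun x : Pt 3 =>
    P0_comps (fun j => pd j C.a x) (fun j => pd j C.b x) (C.c0 x) (v x)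
  have q0 := comp_eq hv hsol ∅ ![{0}, {1}, {2}] ![-1, -1, -1]
    (by
      intro u D
      rw [first_order]
      simp [Fin.sum_univ_three, show ∀ j : Fin 3, ({j} : Finset (Fin 3)) ≠ ∅ by decide,
        show (univ : Finset (Fin 3)) ≠ ∅ by decide]
      try ring)
    (by
      simp only [Coeffs.da, Coeffs.db, (hP _).1]
      exact li_add (li_add (li_add (ta _ _) (ta _ _)) (ta _ _)) (tc _))
  have q1 := comp_eq hv hsol {0} ![∅, {0, 1}, {0, 2}] ![-1, -1, -1]
    (by
      intro u D
      rw [first_order]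
      simp +decide [Fin.sum_univ_three]
      try ring)
    (by
      simp only [Coeffs.da, Coeffs.db, (hP _).2.1]
      exact li_add (li_sub (tb _ _) (li_add (tb _ _) (tb _ _))) (tc _))
  have q2 := comp_eq hv hsol {1} ![{0, 1}, ∅, {1, 2}] ![1, -1, -1]
    (by
      intro u D
      rw [first_order]
      simp +decide [Fin.sum_univ_three]
      try ring)
    (by
      simp only [Coeffs.da, Coeffs.db, (hP _).2.2.1]
      exact li_add (li_sub (tb _ _) (li_add (tnb _ _) (tb _ _))) (tc _))
  have q3 := comp_eq hv hsol {2} ![{0, 2}, {1, 2}, ∅] ![1, 1, -1]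
    (by
      intro u D
      rw [first_order]
      simp +decide [Fin.sum_univ_three]
      try ring)
    (by
      simp only [Coeffs.da, Coeffs.db, (hP _).2.2.2.1]
      exact li_add (li_sub (tb _ _) (li_sub (tnb _ _) (tb _ _))) (tc _))
  have q01 := comp_eq hv hsol {0, 1} ![{1}, {0}, univ] ![1, -1, -1]
    (by
      intro u D
      rw [first_order]
      simp +decide [Fin.sum_univ_three]
      try ring)
    (by
      simp only [Coeffs.da, Coeffs.db, (hP _).2.2.2.2.1]
      exact li_add (li_add (li_sub (ta _ _) (ta _ _)) (ta _ _)) (tc _))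
  have q02 := comp_eq hv hsol {0, 2} ![{2}, univ, {0}] ![1, 1, -1]
    (by
      intro u D
      rw [first_order]
      simp +decide [Fin.sum_univ_three]
      try ring)
    (by
      simp only [Coeffs.da, Coeffs.db, (hP _).2.2.2.2.2.1]
      exact li_add (li_add (li_sub (ta _ _) (ta _ _)) (tna _ _)) (tc _))
  have q12 := comp_eq hv hsol {1, 2} ![univ, {2}, {1}] ![-1, 1, -1]
    (by
      intro u D
      rw [first_order]
      simp +decide [Fin.sum_univ_three]
      try ring)
    (by
      simp only [Coeffs.da, Coeffs.db, (hP _).2.2.2.2.2.2.1]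
      exact li_add (li_add (li_sub (ta _ _) (ta _ _)) (ta _ _)) (tc _))
  have qu := comp_eq hv hsol univ ![{1, 2}, {0, 2}, {0, 1}] ![-1, 1, -1]
    (by
      intro u D
      rw [first_order]
      simp +decide [Fin.sum_univ_three]
      try ring)
    (by
      simp only [Coeffs.da, Coeffs.db, (hP _).2.2.2.2.2.2.2]
      exact li_add (li_add (li_sub (tb _ _) (tb _ _)) (tb _ _)) (tc _))
  filter_upwards [q0, q1, q2, q3, q01, q02, q12, qu] with x h0 h1 h2 h3 h01 h02 h12 hu
  simp only [Coeffs.da, Coeffs.db] at h0 h1 h2 h3 h01 h02 h12 hu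
  obtain ⟨p0, p1, p2, p3, p01, p02, p12, pu⟩ := hP x
  rw [p0] at h0
  rw [p1] at h1
  rw [p2] at h2
  rw [p3] at h3
  rw [p01] at h01
  rw [p02] at h02
  rw [p12] at h12
  rw [pu] at hu
  simp only [Fin.sum_univ_three, Matrix.cons_val] at h0 h1 h2 h3 h01 h02 h12 hu
  refine ⟨?_, ?_, ?_, ?_, ?_, ?_, ?_, ?_⟩
  · linear_combination h0
  · linear_combination h1
  · linear_combination h2
  · linear_combination h3
  · linear_combination h01
  · linear_combination h02
  · linear_combination h12
  · linear_combination hu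

/-- Integrability of the three scalar integrands. -/
lemma scalar_int (C : Coeffs) {f β φ : Pt 3 → ℂ} {Df : Fin 3 → Pt 3 → ℂ} (κ : ℂ)
    (hf : LocallyIntegrable f volume) (hD : ∀ j, LocallyIntegrable (Df j) volume)
    (hβ : ContDiff ℝ 1 β) (hφ : IsTest φ) :
    Integrable (fun x => (Df 0 x * pd 0 φ x + Df 1 x * pd 1 φ x + Df 2 x * pd 2 φ x)
      - κ * (f x * φ x)) volume ∧
    Integrable (fun x => (C.ω : ℂ) ^ 2 * (C.γ x * (C.μf x : ℂ) - ((C.ε₀ * C.μ₀ : ℝ) : ℂ))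
      * (f x * φ x)) volume ∧
    Integrable (fun x => (pd 0 β x * pd 0 β x + pd 1 β x * pd 1 β x + pd 2 β x * pd 2 β x)
        * (f x * φ x)
      + (pd 0 β x * (Df 0 x * φ x + f x * pd 0 φ x) + pd 1 β x * (Df 1 x * φ x + f x * pd 1 φ x)
        + pd 2 β x * (Df 2 x * φ x + f x * pd 2 φ x))) volume := by
  have hc : ∀ j, Continuous (pd j β) := pd_cont hβ
  have m : ∀ {c g ψ : Pt 3 → ℂ}, Continuous c → LocallyIntegrable g volume → CC ψ →
      Integrable (fun x => c x * (g x * ψ x)) volume := by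
    intro c g ψ h1 h2 h3
    have := li_int (li_mul h2 h1) h3
    simpa only [mul_assoc] using this
  have t : ∀ j, Integrable (fun x => Df j x * pd j φ x) volume :=
    fun j => li_int (hD j) (hφ.c1c.pd j)
  have hγ : Continuous C.γ := (γ_C1 C).continuous
  have hμ : Continuous fun x => (C.μf x : ℂ) := (contDiff_ofReal C.hμC1).continuous
  refine ⟨(((t 0).add (t 1)).add (t 2)).sub (m continuous_const hf hφ.c1c.cc), ?_, ?_⟩
  · exact m (continuous_const.mul ((hγ.mul hμ).sub continuous_const)) hf hφ.c1c.cc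
  · have s : ∀ j, Integrable (fun x => pd j β x * (Df j x * φ x + f x * pd j φ x)) volume := by
      intro j
      refine ((m (hc j) (hD j) hφ.c1c.cc).add (m (hc j) hf (hφ.c1c.pd j))).congr
        (Filter.Eventually.of_forall fun x => ?_)
      simp only [Pi.add_apply]
      ring
    exact (m ((((hc 0).mul (hc 0)).add ((hc 1).mul (hc 1))).add ((hc 2).mul (hc 2)))
      hf hφ.c1c.cc).add (((s 0).add (s 1)).add (s 2))

lemma comb3 {F G H : Pt n → ℂ} (hF : Integrable F volume) (hG : Integrable G volume)
    (hH : Integrable H volume) :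
    (∫ x, F x) + (-(∫ x, G x) + ∫ x, H x) = ∫ x, (F x - G x + H x) := by
  rw [integral_add (f := fun x => F x - G x) (hF.sub hG) hH, integral_sub hF hG]
  ring

/-- Proposition 2.3.  If `v`, with components in `H¹_loc(ℝ³)`, is a
weak solution of `P(γ,μ,ω)v = 0` on `ℝ³`, then for every `φ = φ⁰ + φ³` with smooth
compactly supported components,
`∫ [⟨δ(v⁰+v³),δφ⟩ + ⟨d(v⁰+v³),dφ⟩ − ω²ε₀μ₀⟨v⁰+v³,φ⟩] dx + ⟨q̃(γ,μ,ω)(v⁰+v³), φ⟩ = 0`,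
the derivatives of `v⁰, v³` being weak derivatives. -/
theorem statement2 (C : Coeffs) (v : Form 3) (Dv : Fin 3 → Form 3)
    (hv : H1locWith v Dv) (hsol : IsWeakSolP C v) :
    ∀ φ : Form 3, TestForm φ →
      (∀ (x : Pt 3) (S : Finset (Fin 3)), S ≠ ∅ → S ≠ univ → φ x S = 0) →
      (∫ x, ginner (gdel fun j => proj 0 (Dv j x) + proj 3 (Dv j x))
            (gdel fun j => Dcl φ j x)
          + ginner (gd fun j => proj 0 (Dv j x) + proj 3 (Dv j x))
            (gd fun j => Dcl φ j x)
          - (C.ω : ℂ) ^ 2 * ((C.ε₀ * C.μ₀ : ℝ) : ℂ)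
            * ginner (proj 0 (v x) + proj 3 (v x)) (φ x))
        + qtPair C v Dv φ = 0 := by
  intro φ hφ hφ0
  have hD0 : ∀ (x : Pt 3) (j : Fin 3) (S : Finset (Fin 3)), S ≠ ∅ → S ≠ univ →
      Dcl φ j x S = 0 := by
    intro x j S h1 h2
    have : (fun y => φ y S) = fun _ => (0 : ℂ) := funext fun y => hφ0 y S h1 h2
    simp [Dcl, this, pd]
  have li : ∀ S, LocallyIntegrable (fun x => v x S) volume := fun S => (hv.1 S).li
  have lD : ∀ j S, LocallyIntegrable (fun x => Dv j x S) volume := fun j S => (hv.2.2 j S).li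
  set p : Pt 3 → ℂ := fun x => φ x ∅ with hp
  set q : Pt 3 → ℂ := fun x => φ x univ with hq
  have tp : IsTest p := hφ ∅
  have tq : IsTest q := hφ univ
  set κ : ℂ := (C.ω : ℂ) ^ 2 * ((C.ε₀ * C.μ₀ : ℝ) : ℂ) with hκ
  obtain ⟨i1, i2, i3⟩ := scalar_int C κ (li ∅) (fun j => lD j ∅) (b_C1 C) tp
  obtain ⟨k1, k2, k3⟩ := scalar_int C κ (li univ) (fun j => lD j univ) (a_C1 C) tq
  -- the three integrals in explicit form
  have e1 : ∀ x, ginner (gdel fun j => proj 0 (Dv j x) + proj 3 (Dv j x))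
            (gdel fun j => Dcl φ j x)
          + ginner (gd fun j => proj 0 (Dv j x) + proj 3 (Dv j x))
            (gd fun j => Dcl φ j x)
          - κ * ginner (proj 0 (v x) + proj 3 (v x)) (φ x)
      = ((Dv 0 x ∅ * pd 0 p x + Dv 1 x ∅ * pd 1 p x + Dv 2 x ∅ * pd 2 p x)
          - κ * (v x ∅ * p x))
        + ((Dv 0 x univ * pd 0 q x + Dv 1 x univ * pd 1 q x + Dv 2 x univ * pd 2 q x)
          - κ * (v x univ * q x)) := by
    intro x
    rw [second_order (fun j => Dv j x) (fun j => Dcl φ j x) (hD0 x),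
      zeroth_order _ _ (hφ0 x)]
    simp only [Dcl, hp, hq]
    ring
  have e2 : ∀ x, (C.ω : ℂ) ^ 2 * (C.γ x * (C.μf x : ℂ) - ((C.ε₀ * C.μ₀ : ℝ) : ℂ))
      * ginner (proj 0 (v x) + proj 3 (v x)) (φ x)
      = (C.ω : ℂ) ^ 2 * (C.γ x * (C.μf x : ℂ) - ((C.ε₀ * C.μ₀ : ℝ) : ℂ)) * (v x ∅ * p x)
        + (C.ω : ℂ) ^ 2 * (C.γ x * (C.μf x : ℂ) - ((C.ε₀ * C.μ₀ : ℝ) : ℂ))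
          * (v x univ * q x) := by
    intro x
    rw [zeroth_order _ _ (hφ0 x)]
    ring
  have e3 : ∀ x, ginner (C.db x) (C.db x) * (v x ∅ * φ x ∅)
      + ginner (C.da x) (C.da x) * (v x univ * φ x univ)
      + (∑ j, pd j C.b x * (Dv j x ∅ * φ x ∅ + v x ∅ * Dcl φ j x ∅))
      + ∑ j, pd j C.a x * (Dv j x univ * φ x univ + v x univ * Dcl φ j x univ)
      = ((pd 0 C.b x * pd 0 C.b x + pd 1 C.b x * pd 1 C.b x + pd 2 C.b x * pd 2 C.b x)
            * (v x ∅ * p x)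
          + (pd 0 C.b x * (Dv 0 x ∅ * p x + v x ∅ * pd 0 p x)
            + pd 1 C.b x * (Dv 1 x ∅ * p x + v x ∅ * pd 1 p x)
            + pd 2 C.b x * (Dv 2 x ∅ * p x + v x ∅ * pd 2 p x)))
        + ((pd 0 C.a x * pd 0 C.a x + pd 1 C.a x * pd 1 C.a x + pd 2 C.a x * pd 2 C.a x)
            * (v x univ * q x)
          + (pd 0 C.a x * (Dv 0 x univ * q x + v x univ * pd 0 q x)
            + pd 1 C.a x * (Dv 1 x univ * q x + v x univ * pd 1 q x)
            + pd 2 C.a x * (Dv 2 x univ * q x + v x univ * pd 2 q x))) := by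
    intro x
    simp only [Coeffs.da, Coeffs.db, ginner_oneG, Fin.sum_univ_three, Dcl, hp, hq]
    ring
  unfold qtPair
  simp_rw [e1, e2, e3]
  have I1 := i1.add k1
  have I2 := i2.add k2
  have I3 := i3.add k3
  -- the terms with vanishing integral
  have cp : C1c fun x => C.c0 x * p x := C1c.mul_left (c_C1 C) tp.c1c
  have cq : C1c fun x => C.c0 x * q x := C1c.mul_left (c_C1 C) tq.c1c
  have dp := fun j S => ZI_div (li S) (lD j S) (hv.2.1 j S) cp
  have dq := fun j S => ZI_div (li S) (lD j S) (hv.2.1 j S) cq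
  have rp := fun j k S =>
    ZI_curl (li S) (lD j S) (lD k S) (hv.2.1 j S) (hv.2.1 k S) (b_C1 C) tp
  have rq := fun j k S =>
    ZI_curl (li S) (lD j S) (lD k S) (hv.2.1 j S) (hv.2.1 k S) (a_C1 C) tq
  have Z0 := (((rp 0 1 {0, 1}).add (rp 0 2 {0, 2})).add (rp 1 2 {1, 2})).sub
    (((dp 0 {0}).add (dp 1 {1})).add (dp 2 {2}))
  have Z3 := (((rq 0 2 {1}).sub (rq 1 2 {0})).sub (rq 0 1 {2})).sub
    (((dq 0 {1, 2}).sub (dq 1 {0, 2})).add (dq 2 {0, 1}))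
  have Z := (Z0.add Z3).2
  refine (comb3 I1 I2 I3).trans ?_
  rw [← Z]
  refine integral_congr_ae ?_
  filter_upwards [all_eqs hv hsol] with x hx
  obtain ⟨h0, h1, h2, h3, h01, h02, h12, hu⟩ := hx
  have hc := c_sq C x
  simp only [Pi.add_apply]
  rw [pd_mul (c_C1 C) tp.c1c.1, pd_mul (c_C1 C) tp.c1c.1, pd_mul (c_C1 C) tp.c1c.1,
    pd_mul (c_C1 C) tq.c1c.1, pd_mul (c_C1 C) tq.c1c.1, pd_mul (c_C1 C) tq.c1c.1,
    pd_c, pd_c, pd_c]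
  linear_combination (pd 0 p x + p x * pd 0 C.b x) * h1 + (pd 1 p x + p x * pd 1 C.b x) * h2
    + (pd 2 p x + p x * pd 2 C.b x) * h3 + C.c0 x * p x * h0
    + (pd 0 q x + q x * pd 0 C.a x) * h12 - (pd 1 q x + q x * pd 1 C.a x) * h02
    + (pd 2 q x + q x * pd 2 C.a x) * h01 + C.c0 x * q x * hu
    - (v x ∅ * p x + v x univ * q x) * hc

end EMPaper
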